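/- Let m ≥ 12 be an integer. Then the m-gonal form P_m(x₁) + 2P_m(x₂) + 2P_m(x₃) + ⋯ + 2P_m(x_n) with n = ⌊m/2⌋ variables (one coefficient 1 and n-1 coefficients 2) is universal, and no such form with fewer than ⌊m/2⌋ variables is universal; in particular any form ⟨1,2,2,…,2⟩_m representing m-2 must have rank at least ⌊m/2⌋. -/

import Mathlib

/-- The generalized `m`-gonal number `P_m(x) = ((m-2)x² - (m-4)x)/2`. -/
def polygonal (m x : ℤ) : ℤ := ((m - 2) * x ^ 2 - (m - 4) * x) / 2

/-- The form `⟨1,2,…,2⟩_m` with `n` variables: one coefficient `1` and `n-1`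
coefficients `2`. -/
def oneTwoForm (m : ℤ) (n : ℕ) (x : Fin n → ℤ) : ℤ :=
  ∑ k : Fin n, (if (k : ℕ) = 0 then 1 else 2) * polygonal m (x k)

/-!
Since `P_m(x) = (m-2) * (x² - x)/2 + x`, a point `x` gives the value `(m-2) * a + b` for every `m`
at once, where `b` and `2 * a + b` are the weighted sums of the `x k` and of the `(x k)²`. To
represent `N > m - 2`, divide by `m - 2` to get `N = (m-2) * a + r`. A variable equal to `0` or `1`
adds `0` or `2` to `b` and leaves `a` alone, so six variables need only reach a short interval of
values `b`.

For a fixed odd `d`, a change of variables in the style of Cauchy's lemma turns the representation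
of `(a, b)` by six variables into `w² + p² + q² + r² = a - P₅(b) + 8bd - 11d²` with `w` odd. By
Lagrange's theorem this is soluble unless the right side is negative or divisible by `8`. The best
`d` makes it nonnegative for large `a`, leaving finitely many pairs to a direct search, and
divisibility by `8` means `8 ∣ a - P₅(b) - 3`. The latter fails for `b` or for `b - 2`, which
settles seven or more variables. For six variables, `m - 2` is `10` or `11`, and it fails for one of
`(a, r)`, `(a + 1, r - (m-2))`, `(a - 1, r + (m-2))` since the second difference `3(m-2)²` of `P₅`
is not divisible by `8`.

For the lower bound, the values of `P_m` are `0`, `1`, `m - 3` and numbers `≥ m`, so `m - 2` can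
only be obtained from zeros and ones.
-/

section Polygonal

lemma two_mul_polygonal (m x : ℤ) : 2 * polygonal m x = (m - 2) * (x ^ 2 - x) + 2 * x := by
  have hx : (2 : ℤ) ∣ x ^ 2 - x := by
    rw [show x ^ 2 - x = x * (x - 1) by ring]
    exact (Int.even_mul_pred_self x).two_dvd
  have hnum : (m - 2) * x ^ 2 - (m - 4) * x = (m - 2) * (x ^ 2 - x) + 2 * x := by ring
  rw [polygonal, hnum, Int.mul_ediv_cancel' ((hx.mul_left _).add (dvd_mul_right 2 x))]

lemma polygonal_nonneg {m : ℤ} (hm : 3 ≤ m) (x : ℤ) : 0 ≤ polygonal m x := by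
  have hneg : 0 ≤ x ^ 2 - x := sub_nonneg.2 (Int.le_self_sq x)
  have hpos : 0 ≤ x ^ 2 + x := by linarith [Int.le_self_sq (-x), neg_sq x]
  linarith [two_mul_polygonal m x, mul_nonneg (sub_nonneg.2 hm) hneg]

lemma polygonal_eq_or_le {m : ℤ} (hm : 4 ≤ m) (x : ℤ) :
    polygonal m x = 0 ∨ polygonal m x = 1 ∨ polygonal m x = m - 3 ∨ m ≤ polygonal m x := by
  have h := two_mul_polygonal m x
  obtain rfl | rfl | rfl | hx : x = 0 ∨ x = 1 ∨ x = -1 ∨ (x ≤ -2 ∨ 2 ≤ x) := by omega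
  · left; linarith
  · right; left; linarith
  · right; right; left; linarith
  · right; right; right
    have hsq : 4 ≤ x ^ 2 := by rcases hx with hx | hx <;> nlinarith
    have hfactor : 0 ≤ (x - 2) * (x + 1) := by rcases hx with hx | hx <;> nlinarith
    linarith [mul_nonneg (sub_nonneg.2 hm) hfactor]

lemma polygonal_five_sub_two (b : ℤ) : polygonal 5 (b - 2) = polygonal 5 b - 6 * b + 7 := by
  linarith [two_mul_polygonal 5 b, two_mul_polygonal 5 (b - 2)]

lemma polygonal_five_add_sub (b c : ℤ) :
    polygonal 5 (b + c) + polygonal 5 (b - c) = 2 * polygonal 5 b + 3 * c ^ 2 := by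
  linarith [two_mul_polygonal 5 b, two_mul_polygonal 5 (b + c), two_mul_polygonal 5 (b - c)]

end Polygonal

section LowerBound

lemma oneTwoForm_succ (m : ℤ) (n : ℕ) (x : Fin (n + 1) → ℤ) :
    oneTwoForm m (n + 1) x = polygonal m (x 0) + 2 * ∑ i : Fin n, polygonal m (x i.succ) := by
  simp [oneTwoForm, Fin.sum_univ_succ, Finset.mul_sum]

lemma le_of_oneTwoForm_eq_sub_two {m : ℤ} (hm : 5 ≤ m) {n : ℕ} {x : Fin n → ℤ}
    (hx : oneTwoForm m n x = m - 2) : m ≤ 2 * n + 1 := by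
  obtain _ | k := n
  · simp only [oneTwoForm, Finset.univ_eq_empty, Finset.sum_empty] at hx
    omega
  rw [oneTwoForm_succ] at hx
  have hnonneg := polygonal_nonneg (show 3 ≤ m by omega)
  have hvalues := polygonal_eq_or_le (show 4 ≤ m by omega)
  have hle_one : ∀ i : Fin k, polygonal m (x i.succ) ≤ 1 := fun i ↦ by
    have hle_sum := Finset.single_le_sum (f := fun j : Fin k ↦ polygonal m (x j.succ))
      (fun j _ ↦ hnonneg _) (Finset.mem_univ i)
    have := hvalues (x i.succ)
    have := hnonneg (x 0)
    omega
  have hsum_le : ∑ i : Fin k, polygonal m (x i.succ) ≤ k := by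
    simpa using Finset.sum_le_card_nsmul Finset.univ _ 1 fun i _ ↦ hle_one i
  have hsum_nonneg : 0 ≤ ∑ i : Fin k, polygonal m (x i.succ) :=
    Finset.sum_nonneg fun i _ ↦ hnonneg _
  have := hvalues (x 0)
  push_cast
  omega

end LowerBound

/-- The pair `(a, b)` is represented uniformly in rank `n` if some point gives `⟨1,2,…,2⟩_m` the
value `(m - 2) * a + b` for all `m` simultaneously. Comparing coefficients of `m`, this says that
`b` and `2 * a + b` are the weighted sums of the coordinates and of their squares. -/
def RepresentsUniformly (n : ℕ) (a b : ℤ) : Prop :=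
  ∃ x : Fin n → ℤ, ∀ m : ℤ, oneTwoForm m n x = (m - 2) * a + b

namespace RepresentsUniformly

lemma rank_one {a b : ℤ} (h : b ^ 2 = 2 * a + b) : RepresentsUniformly 1 a b := by
  refine ⟨fun _ ↦ b, fun m ↦ ?_⟩
  have hform : oneTwoForm m 1 (fun _ ↦ b) = polygonal m b := by simp [oneTwoForm]
  refine mul_left_cancel₀ two_ne_zero ?_
  linear_combination 2 * hform + two_mul_polygonal m b + (m - 2) * h

lemma snoc {n : ℕ} {a b : ℤ} (hn : n ≠ 0) (h : RepresentsUniformly n a b) (y : ℤ) :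
    RepresentsUniformly (n + 1) (a + (y ^ 2 - y)) (b + 2 * y) := by
  obtain ⟨x, hx⟩ := h
  refine ⟨Fin.snoc x y, fun m ↦ ?_⟩
  have hform : oneTwoForm m (n + 1) (Fin.snoc x y) = oneTwoForm m n x + 2 * polygonal m y := by
    simp only [oneTwoForm, Fin.sum_univ_castSucc, Fin.snoc_castSucc, Fin.snoc_last,
      Fin.val_castSucc, Fin.val_last, if_neg hn]
  rw [hform, hx, two_mul_polygonal]
  ring

lemma snoc_zero {n : ℕ} {a b : ℤ} (hn : n ≠ 0) (h : RepresentsUniformly n a b) :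
    RepresentsUniformly (n + 1) a b := by
  simpa using h.snoc hn 0

lemma snoc_one {n : ℕ} {a b : ℤ} (hn : n ≠ 0) (h : RepresentsUniformly n a (b - 2)) :
    RepresentsUniformly (n + 1) a b := by
  simpa using h.snoc hn 1

lemma rank_add {n : ℕ} (hn : n ≠ 0) {a c d : ℤ} (hcd : c < d)
    (h : ∀ b, c ≤ b → b ≤ d → RepresentsUniformly n a b) (k : ℕ) {b : ℤ} (hcb : c ≤ b)
    (hbd : b ≤ d + 2 * k) : RepresentsUniformly (n + k) a b := by
  induction k generalizing b with
  | zero => exact h b hcb (by simpa using hbd)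
  | succ k ih =>
    push_cast at hbd
    have hnk : n + k ≠ 0 := by omega
    rcases le_or_gt b (d + 2 * k) with hle | hlt
    · exact (ih hcb hle).snoc_zero hnk
    · exact (ih (by omega) (by omega)).snoc_one hnk

lemma zero_left {n : ℕ} {b : ℤ} (hb : 0 ≤ b) (hbn : b < 2 * n) : RepresentsUniformly n 0 b := by
  obtain ⟨k, rfl⟩ : ∃ k, n = 1 + k := ⟨n - 1, by omega⟩
  refine rank_add one_ne_zero zero_lt_one (fun c hc₀ hc₁ ↦ rank_one ?_) k hb (by omega)
  obtain rfl | rfl : c = 0 ∨ c = 1 := by omega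
  all_goals norm_num

lemma rank_six {a b x₁ x₂ x₃ x₄ x₅ x₆ : ℤ} (hlin : x₁ + 2 * (x₂ + x₃ + x₄ + x₅ + x₆) = b)
    (hsq : x₁ ^ 2 + 2 * (x₂ ^ 2 + x₃ ^ 2 + x₄ ^ 2 + x₅ ^ 2 + x₆ ^ 2) = 2 * a + b) :
    RepresentsUniformly 6 a b := by
  obtain ⟨c, hc⟩ : ∃ c, x₁ ^ 2 = 2 * c + x₁ :=
    ⟨polygonal 3 x₁ - x₁, by linarith [two_mul_polygonal 3 x₁]⟩
  convert (((((rank_one hc).snoc one_ne_zero x₂).snoc two_ne_zero x₃).snoc three_ne_zero x₄).snoc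
    four_ne_zero x₅).snoc (by norm_num) x₆ using 1 <;> linarith

end RepresentsUniformly

section FourSquares

lemma exists_sum_four_squares_odd {K : ℤ} (hK : 0 ≤ K) (h8 : ¬ 8 ∣ K) :
    ∃ w p q r : ℤ, Odd w ∧ w ^ 2 + p ^ 2 + q ^ 2 + r ^ 2 = K := by
  lift K to ℕ using hK
  obtain ⟨w, p, q, r, h⟩ := Nat.sum_four_squares K
  zify at h
  rcases Int.even_or_odd (w : ℤ) with ⟨w', hw⟩ | hw
  case inr => exact ⟨w, p, q, r, hw, h⟩
  rcases Int.even_or_odd (p : ℤ) with ⟨p', hp⟩ | hp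
  case inr => exact ⟨p, w, q, r, hp, by linarith⟩
  rcases Int.even_or_odd (q : ℤ) with ⟨q', hq⟩ | hq
  case inr => exact ⟨q, w, p, r, hq, by linarith⟩
  rcases Int.even_or_odd (r : ℤ) with ⟨r', hr⟩ | hr
  case inr => exact ⟨r, w, p, q, hr, by linarith⟩
  -- If all four are even, apply the half-sum reflection: the new coordinates are odd.
  have hquarter : 4 * (w' ^ 2 + p' ^ 2 + q' ^ 2 + r' ^ 2) = K := by
    rw [← h, hw, hp, hq, hr]; ring
  refine ⟨w' + p' + q' + r', w' + p' - q' - r', w' - p' + q' - r', w' - p' - q' + r', ?_,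
    by linarith⟩
  have hodd : Odd (w' ^ 2 + p' ^ 2 + q' ^ 2 + r' ^ 2) := by
    rw [← Int.not_even_iff_odd, even_iff_two_dvd]
    omega
  simpa [Int.odd_add, Int.even_add, Int.even_pow, Int.odd_pow] using hodd

lemma exists_sq_two_mul_sub_eq_and_even_add {w d : ℤ} (hw : Odd w) (hd : Odd d) (c : ℤ) :
    ∃ t, (2 * t - d) ^ 2 = w ^ 2 ∧ Even (t + c) := by
  obtain ⟨t, ht⟩ := hw.add_odd hd
  rcases Int.even_or_odd (t + c) with heven | hodd
  · exact ⟨t, by rw [show 2 * t - d = w by linarith], heven⟩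
  · exact ⟨d - t, by rw [show 2 * (d - t) - d = -w by linarith, neg_sq], by
      rw [show d - t + c = t + c + d - 2 * t by ring]
      exact (hodd.add_odd hd).sub (even_two_mul t)⟩

/-- The half-sum reflection behind Cauchy's lemma on sums of four squares with prescribed sum. -/
lemma exists_sum_eq_two_mul_and_sum_sq_eq {t p q r : ℤ} (h : Even (t + p + q + r)) :
    ∃ y₁ y₂ y₃ y₄ : ℤ, y₁ + y₂ + y₃ + y₄ = 2 * t ∧
      y₁ ^ 2 + y₂ ^ 2 + y₃ ^ 2 + y₄ ^ 2 = t ^ 2 + p ^ 2 + q ^ 2 + r ^ 2 := by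
  obtain ⟨u, hu⟩ := h
  obtain rfl : t = 2 * u - p - q - r := by linarith
  exact ⟨u, u - q - r, u - p - r, u - p - q, by ring, by ring⟩

end FourSquares

namespace RepresentsUniformly

lemma rank_six_of_sum_four_squares {a b d w p q r : ℤ} (hd : Odd d) (hw : Odd w)
    (h : w ^ 2 + p ^ 2 + q ^ 2 + r ^ 2 = a - polygonal 5 b + 8 * b * d - 11 * d ^ 2) :
    RepresentsUniformly 6 a b := by
  obtain ⟨t, ht, heven⟩ := exists_sq_two_mul_sub_eq_and_even_add hw hd (p + q + r)
  obtain ⟨y₁, y₂, y₃, y₄, hsum, hsq⟩ :=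
    exists_sum_eq_two_mul_and_sum_sq_eq (t := t) (p := p) (q := q) (r := r)
      (by simpa only [add_assoc] using heven)
  -- With this `x₁` and `x₆`, the quadratic condition involves `t` only through `(2 * t - d) ^ 2`.
  refine rank_six (x₁ := 4 * d - b - 2 * t) (x₂ := y₁) (x₃ := y₂) (x₄ := y₃) (x₅ := y₄)
    (x₆ := b - 2 * d - t) ?_ ?_
  · linear_combination 2 * hsum
  · linear_combination 2 * hsq + 2 * h + 2 * ht - two_mul_polygonal 5 b

lemma rank_six_of_not_dvd {a b : ℤ} (hab : b ^ 2 + 242 ≤ 22 * a + 11 * b)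
    (h8 : ¬ 8 ∣ a - polygonal 5 b - 3) : RepresentsUniformly 6 a b := by
  -- `d` is the odd integer nearest to `4 * b / 11`, the maximum of `8 * b * d - 11 * d ^ 2`.
  obtain ⟨d, hd, hlower, hupper⟩ : ∃ d, Odd d ∧ -11 ≤ 11 * d - 4 * b ∧ 11 * d - 4 * b ≤ 11 :=
    ⟨2 * (4 * b / 22) + 1, odd_two_mul_add_one _, by omega, by omega⟩
  have hdist : (11 * d - 4 * b) ^ 2 ≤ 11 ^ 2 := sq_le_sq' hlower hupper
  have hnonneg : 0 ≤ a - polygonal 5 b + 8 * b * d - 11 * d ^ 2 := by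
    linarith [two_mul_polygonal 5 b]
  have hndvd : ¬ 8 ∣ a - polygonal 5 b + 8 * b * d - 11 * d ^ 2 := by
    have hsq : 8 ∣ d ^ 2 - 1 := Int.eight_dvd_sq_sub_one_of_odd hd
    rw [mul_assoc]
    omega
  obtain ⟨w, p, q, r, hw, h⟩ := exists_sum_four_squares_odd hnonneg hndvd
  exact rank_six_of_sum_four_squares hd hw h

lemma rank_six_of_le {a b : ℤ} (ha₁ : 1 ≤ a) (ha : a ≤ 22) (hb : 0 ≤ b) (hb₁₀ : b ≤ 10)
    (hab : 2 ≤ a + b) : RepresentsUniformly 6 a b := by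
  have search : ∀ a ∈ Finset.Icc (1 : ℤ) 22, ∀ b ∈ Finset.Icc (max 0 (2 - a)) 10,
      ∃ x₂ ∈ Finset.Icc (-2 : ℤ) 3, ∃ x₃ ∈ Finset.Icc x₂ 3, ∃ x₄ ∈ Finset.Icc x₃ 3,
        ∃ x₅ ∈ Finset.Icc x₄ 3, ∃ x₆ ∈ Finset.Icc x₅ 3,
          (b - 2 * (x₂ + x₃ + x₄ + x₅ + x₆)) ^ 2 +
            2 * (x₂ ^ 2 + x₃ ^ 2 + x₄ ^ 2 + x₅ ^ 2 + x₆ ^ 2) = 2 * a + b := by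
    decide +kernel
  obtain ⟨x₂, -, x₃, -, x₄, -, x₅, -, x₆, -, h⟩ :=
    search a (Finset.mem_Icc.2 ⟨ha₁, ha⟩) b (Finset.mem_Icc.2 ⟨by omega, hb₁₀⟩)
  exact rank_six (sub_add_cancel _ _) h

lemma rank_seven_of_le {a b : ℤ} (ha : 13 ≤ a) (hb : 0 ≤ b) (hb₁₂ : b ≤ 12) :
    RepresentsUniformly 7 a b := by
  by_cases h8 : 8 ∣ a - polygonal 5 b - 3
  · refine (rank_six_of_not_dvd (by nlinarith) ?_).snoc_one (by norm_num)
    rw [polygonal_five_sub_two]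
    omega
  · exact (rank_six_of_not_dvd (by nlinarith) h8).snoc_zero (by norm_num)

lemma of_add_two_le {n : ℕ} (hn : 6 ≤ n) {a b : ℤ} (ha₁ : 1 ≤ a) (ha : a ≤ 22 ∨ 7 ≤ n)
    (hb : 0 ≤ b) (hbn : b + 2 ≤ 2 * n) (hab : 2 ≤ a + b) : RepresentsUniformly n a b := by
  rcases le_or_gt a 22 with ha₂₂ | ha₂₂
  · obtain ⟨k, rfl⟩ := Nat.exists_eq_add_of_le hn
    refine rank_add (c := max 0 (2 - a)) (d := 10) (by norm_num) (by omega) (fun c hc hc₁₀ ↦ ?_) k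
      (by omega) (by omega)
    exact rank_six_of_le ha₁ ha₂₂ (by omega) hc₁₀ (by omega)
  · obtain ⟨k, rfl⟩ := Nat.exists_eq_add_of_le (show 7 ≤ n by omega)
    exact rank_add (c := 0) (d := 12) (by norm_num) (by norm_num)
      (fun c hc hc₁₂ ↦ rank_seven_of_le (by omega) hc hc₁₂) k hb (by omega)

end RepresentsUniformly

section Universality

lemma not_eight_dvd_or_add_or_sub {c : ℤ} (hc : ¬ 8 ∣ c ^ 2) (a b : ℤ) :
    ¬ 8 ∣ a - polygonal 5 b - 3 ∨ ¬ 8 ∣ a - 1 - polygonal 5 (b + c) - 3 ∨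
      ¬ 8 ∣ a + 1 - polygonal 5 (b - c) - 3 := by
  have := polygonal_five_add_sub b c
  omega

lemma exists_oneTwoForm_six_eq {m : ℤ} (hm : m ≤ 13) (hm8 : ¬ 8 ∣ (m - 2) ^ 2) {a r : ℤ}
    (ha : 23 ≤ a) (hr : 0 ≤ r) (hrm : r < m - 2) :
    ∃ x : Fin 6 → ℤ, oneTwoForm m 6 x = (m - 2) * a + r := by
  have represents : ∀ a' b' : ℤ, ¬ 8 ∣ a' - polygonal 5 b' - 3 →
      (m - 2) * a' + b' = (m - 2) * a + r → 22 ≤ a' → -11 ≤ b' → b' ≤ 22 →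
      ∃ x : Fin 6 → ℤ, oneTwoForm m 6 x = (m - 2) * a + r := fun a' b' h8 hval ha' hb' hb₂₂ ↦ by
    obtain ⟨x, hx⟩ := RepresentsUniformly.rank_six_of_not_dvd (by nlinarith) h8
    exact ⟨x, (hx m).trans hval⟩
  rcases not_eight_dvd_or_add_or_sub hm8 a r with h8 | h8 | h8
  · exact represents _ _ h8 rfl (by omega) (by omega) (by omega)
  · exact represents _ _ h8 (by ring) (by omega) (by omega) (by omega)
  · exact represents _ _ h8 (by ring) (by omega) (by omega) (by omega)

lemma exists_oneTwoForm_eq {m : ℤ} (hm : 12 ≤ m) {n : ℕ} (hmn : m ≤ 2 * n + 1) {N : ℤ}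
    (hN : 0 < N) : ∃ x : Fin n → ℤ, oneTwoForm m n x = N := by
  rcases le_or_gt N (m - 2) with hle | hlt
  · obtain ⟨x, hx⟩ := RepresentsUniformly.zero_left (n := n) hN.le (by omega)
    exact ⟨x, by simpa using hx m⟩
  obtain ⟨a, r, ha, hr, hrm, rfl⟩ :
      ∃ a r, 1 ≤ a ∧ 0 ≤ r ∧ r < m - 2 ∧ (m - 2) * a + r = N :=
    ⟨N / (m - 2), N % (m - 2), (Int.le_ediv_iff_mul_le (by omega)).2 (by omega),
      Int.emod_nonneg _ (by omega), Int.emod_lt_of_pos _ (by omega), Int.mul_ediv_add_emod _ _⟩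
  have hsum : 2 ≤ a + r := by
    by_contra! hsmall
    obtain ⟨rfl, rfl⟩ : a = 1 ∧ r = 0 := by omega
    omega
  by_cases hrank : a ≤ 22 ∨ 7 ≤ n
  · have hrep : RepresentsUniformly n a r :=
      .of_add_two_le (by omega) ha hrank hr (by omega) hsum
    exact hrep.imp fun x hx ↦ hx m
  · obtain rfl : n = 6 := by omega
    have hm8 : ¬ 8 ∣ (m - 2) ^ 2 := by
      obtain rfl | rfl : m = 12 ∨ m = 13 := by omega
      all_goals norm_num
    exact exists_oneTwoForm_six_eq (by omega) hm8 (by omega) hr hrm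

end Universality

theorem ell_m_two_one (m : ℤ) (hm : 12 ≤ m) (n : ℕ) (hn : (n : ℤ) = m / 2) :
    (∀ N : ℤ, 0 < N → ∃ x : Fin n → ℤ, oneTwoForm m n x = N) ∧
    (∀ n' : ℕ, n' < n →
      ¬ (∀ N : ℤ, 0 < N → ∃ x : Fin n' → ℤ, oneTwoForm m n' x = N)) ∧
    (∀ n' : ℕ, (∃ x : Fin n' → ℤ, oneTwoForm m n' x = m - 2) → n ≤ n') := by
  have rank_le : ∀ n' : ℕ, (∃ x : Fin n' → ℤ, oneTwoForm m n' x = m - 2) → n ≤ n' := by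
    rintro n' ⟨x, hx⟩
    have := le_of_oneTwoForm_eq_sub_two (by omega) hx
    omega
  refine ⟨fun N hN ↦ exists_oneTwoForm_eq hm (by omega) hN, fun n' hlt huniv ↦ ?_, rank_le⟩
  exact hlt.not_ge (rank_le n' (huniv (m - 2) (by omega)))
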